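/- arXiv:1005.2822 — 2 statements merged into one kernel-verified Lean document; each statement's English description precedes it below -/
import Mathlib

section
/- Let P_{ij} ∈ ℝ² (0 ≤ i,j ≤ 3) be the control points of a planar cubic Bézier tensor-product patch, and define the 36 quantities T_{pq} (0 ≤ p,q ≤ 5) by T_{pq} = Σ_{i+k=p} Σ_{j+ℓ=q} (U_{i,j} × V_{k,ℓ}) C(2,i) C(3,k) C(3,j) C(2,ℓ) with U_{i,j} = P_{i+1,j} − P_{i,j} and V_{i,j} = P_{i,j+1} − P_{i,j}. If T_{pq} > 0 for all 0 ≤ p,q ≤ 5, then the Jacobian satisfies J(u,v) > 0 for all (u,v) ∈ [0,1] × [0,1]. -/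
open scoped BigOperators

/-- The cubic Bernstein polynomial `B_i(u) = C(3,i) u^i (1-u)^(3-i)`. -/
noncomputable def bern (i : ℕ) (u : ℝ) : ℝ :=
  (Nat.choose 3 i : ℝ) * u ^ i * (1 - u) ^ (3 - i)

/-- The derivative `B_i'` of the cubic Bernstein polynomial. -/
noncomputable def bern' (i : ℕ) : ℝ → ℝ := deriv (bern i)

/-- The 2D scalar cross product `p × q = p_x q_y − p_y q_x`. -/
def cross (p q : ℝ × ℝ) : ℝ := p.1 * q.2 - p.2 * q.1

/-- The planar cubic Bézier tensor-product patch with control points `P i j`. -/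
noncomputable def patch (P : Fin 4 → Fin 4 → ℝ × ℝ) (u v : ℝ) : ℝ × ℝ :=
  ∑ i : Fin 4, ∑ j : Fin 4, (bern i u * bern j v) • P i j

/-- The Jacobian `J(u,v) = x_u y_v − y_u x_v` of the patch with control points `P i j`. -/
noncomputable def jacobian (P : Fin 4 → Fin 4 → ℝ × ℝ) (u v : ℝ) : ℝ :=
    deriv (fun u' => (patch P u' v).1) u * deriv (fun v' => (patch P u v').2) v
  - deriv (fun u' => (patch P u' v).2) u * deriv (fun v' => (patch P u v').1) v

/-- Unnormalised degree five monomial weight. -/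
noncomputable def wt5 (p : ℕ) (u : ℝ) : ℝ := u ^ p * (1 - u) ^ (5 - p)

/-- Quadratic Bernstein polynomial. -/
noncomputable def bern2 (i : ℕ) (u : ℝ) : ℝ :=
  (Nat.choose 2 i : ℝ) * u ^ i * (1 - u) ^ (2 - i)

lemma deriv_curve (g : Fin 4 → ℝ) (u : ℝ) :
    deriv (fun u' => ∑ i : Fin 4, bern i u' * g i) u
      = 3 * ∑ i : Fin 3, bern2 i u * (g i.succ - g i.castSucc) := by
  have h1 : HasDerivAt (fun x : ℝ => x) 1 u := hasDerivAt_id u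
  have h2 : HasDerivAt (fun x : ℝ => 1 - x) (-1) u := by
    simpa using h1.const_sub 1
  have e : (fun u' => ∑ i : Fin 4, bern i u' * g i) = fun x : ℝ =>
      (1 - x) ^ 3 * g 0 + (3 * (x * (1 - x) ^ 2)) * g 1
        + (3 * (x ^ 2 * (1 - x))) * g 2 + x ^ 3 * g 3 := by
    funext x
    simp [Fin.sum_univ_four, bern, Nat.choose]
    ring
  rw [e]
  have h := ((((h2.pow 3).mul_const (g 0)).add
    (((h1.mul (h2.pow 2)).const_mul 3).mul_const (g 1))).add
    ((((h1.pow 2).mul h2).const_mul 3).mul_const (g 2))).add ((h1.pow 3).mul_const (g 3))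
  refine (HasDerivAt.deriv (h.congr_deriv ?_))
  simp [Fin.sum_univ_three, bern2, Nat.choose]
  ring

lemma wt5_mul (i : Fin 3) (k : Fin 4) (u : ℝ) :
    bern2 i u * bern k u =
      (Nat.choose 2 i : ℝ) * (Nat.choose 3 k : ℝ) * wt5 (i + k) u := by
  have h : 5 - ((i : ℕ) + k) = (2 - i) + (3 - k) := by omega
  unfold bern2 bern wt5
  rw [h, pow_add, pow_add]
  ring

lemma sum_ite_pair (a b : ℕ) (ha : a < 6) (hb : b < 6) (f : ℕ → ℕ → ℝ) (c : ℝ) :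
    ∑ p : Fin 6, ∑ q : Fin 6, (if a = (p : ℕ) ∧ b = (q : ℕ) then c else 0) * f p q
      = c * f a b := by
  rw [Finset.sum_eq_single (⟨a, ha⟩ : Fin 6), Finset.sum_eq_single (⟨b, hb⟩ : Fin 6)]
  · simp
  · intro q _ hq
    have : ¬ b = (q : ℕ) := fun h => hq (Fin.ext h.symm)
    simp [this]
  · simp
  · intro p _ hp
    have : ¬ a = (p : ℕ) := fun h => hp (Fin.ext h.symm)
    simp [this]
  · simp

lemma wt5_nonneg (p : ℕ) (u : ℝ) (hu : u ∈ Set.Icc (0:ℝ) 1) : 0 ≤ wt5 p u :=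
  mul_nonneg (pow_nonneg hu.1 _) (pow_nonneg (sub_nonneg.2 hu.2) _)

lemma wt5_pos (u : ℝ) (hu : u ∈ Set.Icc (0:ℝ) 1) : ∃ p : Fin 6, 0 < wt5 p u := by
  rcases hu.2.lt_or_eq with h | h
  · exact ⟨0, by simpa [wt5] using pow_pos (sub_pos.2 h) 5⟩
  · exact ⟨5, by simp [wt5, h]⟩

lemma deriv_u (f : Fin 4 → Fin 4 → ℝ) (u v : ℝ) :
    deriv (fun u' => ∑ i : Fin 4, ∑ j : Fin 4, bern i u' * bern j v * f i j) u
      = 3 * ∑ i : Fin 3, ∑ j : Fin 4, bern2 i u * bern j v *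
          (f i.succ j - f i.castSucc j) := by
  have := deriv_curve (fun i => ∑ j : Fin 4, bern j v * f i j) u
  simp only [Finset.mul_sum, ← Finset.sum_sub_distrib, ← mul_sub, ← mul_assoc] at this ⊢
  exact this

lemma deriv_v (f : Fin 4 → Fin 4 → ℝ) (u v : ℝ) :
    deriv (fun v' => ∑ i : Fin 4, ∑ j : Fin 4, bern i u * bern j v' * f i j) v
      = 3 * ∑ k : Fin 4, ∑ l : Fin 3, bern k u * bern2 l v *
          (f k l.succ - f k l.castSucc) := by
  have h := deriv_u (fun j i => f i j) v u
  have e : (fun v' => ∑ i : Fin 4, ∑ j : Fin 4, bern i u * bern j v' * f i j)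
      = fun v' => ∑ j : Fin 4, ∑ i : Fin 4, bern j v' * bern i u * f i j := by
    funext x
    rw [Finset.sum_comm]
    simp only [mul_comm (bern _ u)]
  rw [e, h, Finset.sum_comm]
  simp only [mul_comm (bern _ u)]

lemma sum4_mul (a : Fin 3 → Fin 4 → ℝ) (b : Fin 4 → Fin 3 → ℝ) :
    (∑ i, ∑ j, a i j) * (∑ k, ∑ l, b k l) = ∑ i, ∑ k, ∑ j, ∑ l, a i j * b k l := by
  rw [Finset.sum_mul]
  refine Finset.sum_congr rfl fun i _ => ?_
  rw [Finset.mul_sum]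
  refine Finset.sum_congr rfl fun k _ => ?_
  rw [Finset.sum_mul]
  refine Finset.sum_congr rfl fun j _ => ?_
  rw [Finset.mul_sum]

lemma swap6 (F : Fin 6 → Fin 6 → Fin 3 → Fin 4 → Fin 4 → Fin 3 → ℝ) :
    ∑ p, ∑ q, ∑ i, ∑ k, ∑ j, ∑ l, F p q i k j l
      = ∑ i, ∑ k, ∑ j, ∑ l, ∑ p, ∑ q, F p q i k j l := by
  have h : ∀ G : Fin 6 → Fin 6 → ℝ, ∑ p, ∑ q, G p q = ∑ x : Fin 6 × Fin 6, G x.1 x.2 :=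
    fun G => (Fintype.sum_prod_type' G).symm
  simp only [h]
  rw [Finset.sum_comm]
  refine Finset.sum_congr rfl fun i _ => ?_
  rw [Finset.sum_comm]
  refine Finset.sum_congr rfl fun k _ => ?_
  rw [Finset.sum_comm]
  refine Finset.sum_congr rfl fun j _ => ?_
  rw [Finset.sum_comm]

/-- if all 36 quantities `T_{pq}` are positive, the Jacobian is
positive on the unit square. -/
theorem jacobian_pos_of_T_pos (P : Fin 4 → Fin 4 → ℝ × ℝ)
    (U : Fin 3 → Fin 4 → ℝ × ℝ) (V : Fin 4 → Fin 3 → ℝ × ℝ)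
    (hU : ∀ i j, U i j = P i.succ j - P i.castSucc j)
    (hV : ∀ i j, V i j = P i j.succ - P i j.castSucc)
    (T : Fin 6 → Fin 6 → ℝ)
    (hT : ∀ p q, T p q =
      ∑ i : Fin 3, ∑ k : Fin 4, ∑ j : Fin 4, ∑ l : Fin 3,
        if (i : ℕ) + (k : ℕ) = (p : ℕ) ∧ (j : ℕ) + (l : ℕ) = (q : ℕ) then
          cross (U i j) (V k l) *
            (Nat.choose 2 i : ℝ) * (Nat.choose 3 k : ℝ) *
            (Nat.choose 3 j : ℝ) * (Nat.choose 2 l : ℝ)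
        else 0)
    (hpos : ∀ p q, 0 < T p q) :
    ∀ u ∈ Set.Icc (0:ℝ) 1, ∀ v ∈ Set.Icc (0:ℝ) 1, 0 < jacobian P u v := by
  intro u hu v hv
  have key : jacobian P u v = 9 * ∑ p : Fin 6, ∑ q : Fin 6, T p q * (wt5 p u * wt5 q v) := by
    have e1 : ∀ a b, (patch P a b).1 =
        ∑ i : Fin 4, ∑ j : Fin 4, bern i a * bern j b * (P i j).1 := by
      intro a b; simp [patch, Prod.fst_sum]
    have e2 : ∀ a b, (patch P a b).2 =
        ∑ i : Fin 4, ∑ j : Fin 4, bern i a * bern j b * (P i j).2 := by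
      intro a b; simp [patch, Prod.snd_sum]
    unfold jacobian
    simp only [e1, e2]
    rw [deriv_u (fun i j => (P i j).1), deriv_u (fun i j => (P i j).2),
      deriv_v (fun i j => (P i j).1), deriv_v (fun i j => (P i j).2)]
    have h9 : ∀ a b c d : ℝ, 3 * a * (3 * b) - 3 * c * (3 * d) = 9 * (a * b - c * d) := by
      intros; ring
    rw [h9, sum4_mul, sum4_mul]
    simp only [hT, Finset.sum_mul]
    rw [swap6]
    simp only [← Finset.sum_sub_distrib]
    congr 1
    refine Finset.sum_congr rfl fun i _ => Finset.sum_congr rfl fun k _ =>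
      Finset.sum_congr rfl fun j _ => Finset.sum_congr rfl fun l _ => ?_
    rw [sum_ite_pair (i + k) (j + l) (by omega) (by omega) (fun p q => wt5 p u * wt5 q v)]
    have a1 := wt5_mul i k u
    have a2 := wt5_mul l j v
    rw [add_comm (l : ℕ)] at a2
    simp only [cross, hU, hV, Prod.fst_sub, Prod.snd_sub]
    generalize (P i.succ j).1 - (P i.castSucc j).1 = x1
    generalize (P i.succ j).2 - (P i.castSucc j).2 = y1
    generalize (P k l.succ).1 - (P k l.castSucc).1 = x2
    generalize (P k l.succ).2 - (P k l.castSucc).2 = y2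
    calc _ = (x1 * y2 - y1 * x2) * (bern2 i u * bern k u) * (bern2 l v * bern j v) := by ring
      _ = _ := by rw [a1, a2]; ring
  rw [key]
  obtain ⟨p, hp⟩ := wt5_pos u hu
  obtain ⟨q, hq⟩ := wt5_pos v hv
  have hn : ∀ p q : Fin 6, 0 ≤ T p q * (wt5 p u * wt5 q v) := fun p q =>
    mul_nonneg (hpos p q).le (mul_nonneg (wt5_nonneg _ _ hu) (wt5_nonneg _ _ hv))
  refine mul_pos (by norm_num) (Finset.sum_pos' (fun p _ => Finset.sum_nonneg fun q _ => hn p q)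
    ⟨p, Finset.mem_univ _, Finset.sum_pos' (fun q _ => hn p q)
      ⟨q, Finset.mem_univ _, mul_pos (hpos p q) (mul_pos hp hq)⟩⟩)
end

section
/- Let A, B, C, D ∈ ℝ² be the vertices, in counterclockwise order, of a strictly convex quadrilateral, i.e. (B−A) × (C−B) > 0, (C−B) × (D−C) > 0, (D−C) × (A−D) > 0, and (A−D) × (B−A) > 0. Then the bilinear Coons patch σ(u,v) = (1−u)(1−v) A + u(1−v) B + u v C + (1−u) v D has strictly positive Jacobian J(u,v) = (∂x/∂u)(∂y/∂v) − (∂y/∂u)(∂x/∂v) on all of [0,1] × [0,1]; in particular, the Coons patch of a convex polygon is nondegenerate. -/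
/-- The bilinear Coons patch of the quadrilateral `A B C D`. -/
def bilin (A B C D : ℝ × ℝ) (u v : ℝ) : ℝ × ℝ :=
  ((1 - u) * (1 - v)) • A + (u * (1 - v)) • B + (u * v) • C + ((1 - u) * v) • D

/-- The Jacobian `J(u,v) = x_u y_v − y_u x_v` of a planar map `σ`. -/
noncomputable def jacobianOf (σ : ℝ → ℝ → ℝ × ℝ) (u v : ℝ) : ℝ :=
    deriv (fun u' => (σ u' v).1) u * deriv (fun v' => (σ u v').2) v
  - deriv (fun u' => (σ u' v).2) u * deriv (fun v' => (σ u v').1) v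

/-- the bilinear Coons patch of a strictly convex quadrilateral
(vertices in counterclockwise order) has strictly positive Jacobian on the unit
square; in particular it is nondegenerate. -/
theorem bilinear_coons_convex_nondegenerate (A B C D : ℝ × ℝ)
    (hAB : 0 < cross (B - A) (C - B)) (hBC : 0 < cross (C - B) (D - C))
    (hCD : 0 < cross (D - C) (A - D)) (hDA : 0 < cross (A - D) (B - A)) :
    ∀ u ∈ Set.Icc (0:ℝ) 1, ∀ v ∈ Set.Icc (0:ℝ) 1,
      0 < jacobianOf (bilin A B C D) u v := by
  intro u hu v hv
  obtain ⟨hu0, hu1⟩ := hu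
  obtain ⟨hv0, hv1⟩ := hv
  have aff : ∀ (f : ℝ → ℝ) (a b t : ℝ), (∀ x, f x = a * x + b) → deriv f t = a := by
    intro f a b t h
    have hf : f = fun x => a * x + b := funext h
    rw [hf]
    simpa using (((hasDerivAt_id t).const_mul a).add_const b).deriv
  have h1 : deriv (fun u' => (bilin A B C D u' v).1) u
      = (1 - v) * (B.1 - A.1) + v * (C.1 - D.1) := by
    apply aff _ _ ((1 - v) * A.1 + v * D.1)
    intro x; simp [bilin]; ring
  have h2 : deriv (fun u' => (bilin A B C D u' v).2) u
      = (1 - v) * (B.2 - A.2) + v * (C.2 - D.2) := by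
    apply aff _ _ ((1 - v) * A.2 + v * D.2)
    intro x; simp [bilin]; ring
  have h3 : deriv (fun v' => (bilin A B C D u v').1) v
      = (1 - u) * (D.1 - A.1) + u * (C.1 - B.1) := by
    apply aff _ _ ((1 - u) * A.1 + u * B.1)
    intro x; simp [bilin]; ring
  have h4 : deriv (fun v' => (bilin A B C D u v').2) v
      = (1 - u) * (D.2 - A.2) + u * (C.2 - B.2) := by
    apply aff _ _ ((1 - u) * A.2 + u * B.2)
    intro x; simp [bilin]; ring
  have key : jacobianOf (bilin A B C D) u v
      = (1 - v) * ((1 - u) * cross (A - D) (B - A) + u * cross (B - A) (C - B))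
        + v * ((1 - u) * cross (D - C) (A - D) + u * cross (C - B) (D - C)) := by
    unfold jacobianOf
    rw [h1, h2, h3, h4]
    simp only [cross, Prod.fst_sub, Prod.snd_sub]
    ring
  have comb : ∀ (t a b : ℝ), 0 ≤ t → t ≤ 1 → 0 < a → 0 < b → 0 < (1 - t) * a + t * b := by
    intro t a b h0 h1 ha hb
    rcases h0.eq_or_lt with h | h
    · rw [← h]; simpa using ha
    · have e1 : 0 ≤ (1 - t) * a := mul_nonneg (by linarith) ha.le
      have e2 : 0 < t * b := mul_pos h hb
      linarith
  rw [key]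
  exact comb v _ _ hv0 hv1 (comb u _ _ hu0 hu1 hDA hAB) (comb u _ _ hu0 hu1 hCD hBC)
end
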